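/- For every nonnegative integer n, the identity E*_{2n+1}(q)/(q;q)_{2n+1} = Σ_{D∈Dyck_{2n}} q^{H(D)} Π_{(a,b)∈D} 1/(1−q^{2b+1}) holds in the field of rational functions ℚ(q), where the product runs over all lattice points (a,b) of the Dyck path D. -/

import Mathlib

open Finset

attribute [local instance 10] Classical.propDecidable

noncomputable section

namespace Paper

/-! ### Words and permutation statistics (all words are 1-based). -/

/-- The word (one-line notation, 1-based) of a permutation of `{1, …, N}`:
`word π i = π(i)` for `1 ≤ i ≤ N`, and `0` otherwise. -/
def word {N : ℕ} (π : Equiv.Perm (Fin N)) (i : ℕ) : ℕ :=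
  if h : 1 ≤ i ∧ i ≤ N then (π ⟨i - 1, by omega⟩ : ℕ) + 1 else 0

/-- The major index of a word of length `N`: the sum of the descents. -/
def majW (N : ℕ) (w : ℕ → ℕ) : ℕ :=
  ∑ i ∈ Finset.Icc 1 (N - 1), if w (i + 1) < w i then i else 0

/-- The number of inversions of a word of length `N`. -/
def invW (N : ℕ) (w : ℕ → ℕ) : ℕ :=
  (((Finset.Icc 1 N) ×ˢ (Finset.Icc 1 N)).filter
    fun p => p.1 < p.2 ∧ w p.2 < w p.1).card

/-- The number of descents of a word of length `m`. -/
def desW (m : ℕ) (w : ℕ → ℕ) : ℕ :=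
  ((Finset.Icc 1 (m - 1)).filter fun i => w (i + 1) < w i).card

/-- The number of ascents of a word of length `m`. -/
def ascW (m : ℕ) (w : ℕ → ℕ) : ℕ :=
  ((Finset.Icc 1 (m - 1)).filter fun i => w i < w (i + 1)).card

/-- The number of non-descents of a word of length `m`. -/
def ndesW (m : ℕ) (w : ℕ → ℕ) : ℕ :=
  ((Finset.Icc 1 m).filter fun i => i = m ∨ w i < w (i + 1)).card

/-- The number of non-ascents of a word of length `m`. -/
def nascW (m : ℕ) (w : ℕ → ℕ) : ℕ :=
  ((Finset.Icc 1 m).filter fun i => i = m ∨ ¬ w i < w (i + 1)).card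

/-- `π_e = π₂π₄⋯`, the subword of even-position entries, as a 1-based word. -/
def evenWord {N : ℕ} (π : Equiv.Perm (Fin N)) (j : ℕ) : ℕ := word π (2 * j)

/-- `π_o = π₁π₃⋯`, the subword of odd-position entries, as a 1-based word. -/
def oddWord {N : ℕ} (π : Equiv.Perm (Fin N)) (j : ℕ) : ℕ := word π (2 * j - 1)

/-- A word of length `N` is alternating: `w₁ < w₂ > w₃ < w₄ > ⋯`. -/
def IsAltW (N : ℕ) (w : ℕ → ℕ) : Prop :=
  ∀ i ∈ Finset.Icc 1 (N - 1), (i % 2 = 1 → w i < w (i + 1)) ∧ (i % 2 = 0 → w (i + 1) < w i)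

/-- A word of length `N` is reverse alternating: `w₁ > w₂ < w₃ > w₄ < ⋯`. -/
def IsRaltW (N : ℕ) (w : ℕ → ℕ) : Prop :=
  ∀ i ∈ Finset.Icc 1 (N - 1), (i % 2 = 1 → w (i + 1) < w i) ∧ (i % 2 = 0 → w i < w (i + 1))

/-- `Alt_N`, the set of alternating permutations of `{1, …, N}`. -/
def altPerms (N : ℕ) : Finset (Equiv.Perm (Fin N)) :=
  Finset.univ.filter fun π => IsAltW N (word π)

/-- `Ralt_N`, the set of reverse alternating permutations of `{1, …, N}`. -/
def raltPerms (N : ℕ) : Finset (Equiv.Perm (Fin N)) :=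
  Finset.univ.filter fun π => IsRaltW N (word π)

/-- `κ_N = (1)(2,3)(4,5)⋯`, acting on the 1-based values `{1, …, N}`. -/
def kappaNat (N j : ℕ) : ℕ :=
  if j % 2 = 0 ∧ 2 ≤ j ∧ j + 1 ≤ N then j + 1
  else if j % 2 = 1 ∧ 3 ≤ j ∧ j ≤ N then j - 1
  else j

/-- `η_N = (1,2)(3,4)⋯`, acting on the 1-based values `{1, …, N}`. -/
def etaNat (N j : ℕ) : ℕ :=
  if j % 2 = 1 ∧ j + 1 ≤ N then j + 1
  else if j % 2 = 0 ∧ 2 ≤ j ∧ j ≤ N then j - 1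
  else j

/-- `maj(π⁻¹)`. -/
def majInv (N : ℕ) (π : Equiv.Perm (Fin N)) : ℕ := majW N (word π.symm)

/-- `maj(κ_N π⁻¹)`. -/
def majKappaInv (N : ℕ) (π : Equiv.Perm (Fin N)) : ℕ :=
  majW N fun i => kappaNat N (word π.symm i)

/-- `maj(η_N π⁻¹)`. -/
def majEtaInv (N : ℕ) (π : Equiv.Perm (Fin N)) : ℕ :=
  majW N fun i => etaNat N (word π.symm i)

/-- The reversal permutation `i ↦ N + 1 - i` of `Fin N`. -/
def revPerm (N : ℕ) : Equiv.Perm (Fin N) :=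
  ⟨Fin.rev, Fin.rev, fun i => Fin.rev_rev i, fun i => Fin.rev_rev i⟩

/-- `φ(π)ᵢ = (N+1) - π_{N+1-i}`. -/
def phiMap {N : ℕ} (π : Equiv.Perm (Fin N)) : Equiv.Perm (Fin N) :=
  ((revPerm N).trans π).trans (revPerm N)

/-! ### Lattice paths.

A path with `L` unit steps is encoded by `s : Fin L → Bool` (`true` = up-step `(1,1)`,
`false` = down-step `(1,-1)`). -/

/-- The vertical displacement of the `j`-th step. -/
def stepVal {L : ℕ} (s : Fin L → Bool) (j : ℕ) : ℤ :=
  if h : j < L then (if s ⟨j, h⟩ then 1 else -1) else 0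

/-- The height of the path after `i` steps. -/
def pht {L : ℕ} (s : Fin L → Bool) (i : ℕ) : ℤ := ∑ j ∈ Finset.range i, stepVal s j

/-- A Dyck path: stays (weakly) above the `x`-axis and ends at height `0`. -/
def IsDyck {L : ℕ} (s : Fin L → Bool) : Prop :=
  (∀ i ∈ Finset.range (L + 1), 0 ≤ pht s i) ∧ pht s L = 0

/-- The Dyck paths with `L` steps. -/
def dyckPaths (L : ℕ) : Finset (Fin L → Bool) := Finset.univ.filter fun s => IsDyck s

/-- The (indices of the) valleys of a path: a down-step followed by an up-step. -/
def valleys {L : ℕ} (s : Fin L → Bool) : Finset ℕ :=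
  (Finset.Icc 1 (L - 1)).filter fun i => stepVal s (i - 1) = -1 ∧ stepVal s i = 1

/-- The (indices of the) peaks of a path: an up-step followed by a down-step. -/
def peaks {L : ℕ} (s : Fin L → Bool) : Finset ℕ :=
  (Finset.Icc 1 (L - 1)).filter fun i => stepVal s (i - 1) = 1 ∧ stepVal s i = -1

/-- The (indices of the) high peaks of a path: peaks of height at least `2`. -/
def highPeaks {L : ℕ} (s : Fin L → Bool) : Finset ℕ :=
  (peaks s).filter fun i => 2 ≤ pht s i

/-- The height over abscissa `x` of a path starting at `(-m, 0)`. -/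
def aht (m : ℕ) {L : ℕ} (s : Fin L → Bool) (x : ℤ) : ℤ := pht s (x + m).toNat

/-- `D₁ < D₂`, for `D₁` starting at `(-m₁,0)` and `D₂` at `(-m₂,0)`, `m₁ ≤ m₂`:
strictly below on the common range of abscissas. -/
def PathLT (m₁ m₂ : ℕ) {L₁ L₂ : ℕ} (s₁ : Fin L₁ → Bool) (s₂ : Fin L₂ → Bool) : Prop :=
  ∀ x ∈ Finset.Icc (-(m₁ : ℤ)) (m₁ : ℤ), aht m₁ s₁ x < aht m₂ s₂ x

/-- `D₁ ≤ D₂`: weakly below, sharing no step. -/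
def PathLE (m₁ m₂ : ℕ) {L₁ L₂ : ℕ} (s₁ : Fin L₁ → Bool) (s₂ : Fin L₂ → Bool) : Prop :=
  (∀ x ∈ Finset.Icc (-(m₁ : ℤ)) (m₁ : ℤ), aht m₁ s₁ x ≤ aht m₂ s₂ x) ∧
    ∀ x ∈ Finset.Icc (-(m₁ : ℤ)) ((m₁ : ℤ) - 1),
      ¬(aht m₁ s₁ x = aht m₂ s₂ x ∧ aht m₁ s₁ (x + 1) = aht m₂ s₂ (x + 1))

/-- The abscissas of the common lattice points of two paths. -/
def interPts (m₁ m₂ : ℕ) {L₁ L₂ : ℕ} (s₁ : Fin L₁ → Bool) (s₂ : Fin L₂ → Bool) : Finset ℤ :=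
  (Finset.Icc (-(m₁ : ℤ)) (m₁ : ℤ)).filter fun x => aht m₁ s₁ x = aht m₂ s₂ x

/-- `Dyck^k_{2n}`: tuples `(D₁, …, D_k)` with `D_i ∈ Dyck((-n-2i+2,0) → (n+2i-2,0))`
(0-based: `D_i` has half-length `n + 2i`). -/
abbrev DyckTuple (n k : ℕ) := ∀ i : Fin k, Fin (2 * (n + 2 * (i : ℕ))) → Bool

/-- The tuples `(D₁ ≤ D₂ ≤ ⋯ ≤ D_k) ∈ Dyck^k_{2n}`. -/
def weakTuples (n k : ℕ) : Finset (DyckTuple n k) :=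
  Finset.univ.filter fun D =>
    (∀ i : Fin k, IsDyck (D i)) ∧
      ∀ (i : ℕ) (h : i + 1 < k),
        PathLE (n + 2 * i) (n + 2 * (i + 1)) (D ⟨i, by omega⟩) (D ⟨i + 1, h⟩)

/-- The tuples `(D₁ < D₂ < ⋯ < D_k) ∈ Dyck^k_{2n}`. -/
def strictTuples (n k : ℕ) : Finset (DyckTuple n k) :=
  Finset.univ.filter fun D =>
    (∀ i : Fin k, IsDyck (D i)) ∧
      ∀ (i : ℕ) (h : i + 1 < k),
        PathLT (n + 2 * i) (n + 2 * (i + 1)) (D ⟨i, by omega⟩) (D ⟨i + 1, h⟩)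

/-- The lattice points of a path starting at `(-m, 0)`, as a finite subset of `ℤ × ℤ`. -/
def pathPoints (m : ℕ) {L : ℕ} (s : Fin L → Bool) : Finset (ℤ × ℤ) :=
  (Finset.range (L + 1)).image fun t : ℕ => (-(m : ℤ) + (t : ℤ), pht s t)

/-- The non-valley lattice points of a path starting at `(-m, 0)`. -/
def nonValleyPoints (m : ℕ) {L : ℕ} (s : Fin L → Bool) : Finset (ℤ × ℤ) :=
  ((Finset.range (L + 1)).filter fun t => t ∉ valleys s).image
    fun t : ℕ => (-(m : ℤ) + (t : ℤ), pht s t)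

section Weights

variable {F : Type*} [Field F]

/-- The `i`-th lattice point (in `ℤ × ℕ`) of a path starting at `(a, 0)`. -/
def ptOf (a : ℤ) {L : ℕ} (s : Fin L → Bool) (i : ℕ) : ℤ × ℕ := (a + i, (pht s i).toNat)

/-- `wt_V(D) = ∏_{p ∈ D} wt(p) · ∏_{p ∈ V(D)} w̃t(p)` for a path starting at `(a, 0)`. -/
def wtVal (wt wte : ℤ × ℕ → F) (a : ℤ) {L : ℕ} (s : Fin L → Bool) : F :=
  (∏ i ∈ Finset.range (L + 1), wt (ptOf a s i)) * ∏ i ∈ valleys s, wte (ptOf a s i)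

/-- `wt_HP(D) = ∏_{p ∈ D} wt(p) · ∏_{p ∈ HP(D)} w̃t(p)` for a path starting at `(a, 0)`. -/
def wtHigh (wt wte : ℤ × ℕ → F) (a : ℤ) {L : ℕ} (s : Fin L → Bool) : F :=
  (∏ i ∈ Finset.range (L + 1), wt (ptOf a s i)) * ∏ i ∈ highPeaks s, wte (ptOf a s i)

/-- `∏_{p ∈ D₁ ∩ D₂} f(p)`, for `D₁` starting at `(-m₁,0)` and `D₂` at `(-m₂,0)`. -/
def interProd (f : ℤ × ℕ → F) (m₁ m₂ : ℕ) {L₁ L₂ : ℕ}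
    (s₁ : Fin L₁ → Bool) (s₂ : Fin L₂ → Bool) : F :=
  ∏ x ∈ interPts m₁ m₂ s₁ s₂, f (x, (aht m₁ s₁ x).toNat)

/-- The sum over `(D₁ ≤ ⋯ ≤ D_k) ∈ Dyck^k_{2n}` of
`wt_V(D₁)⋯wt_V(D_k) ∏_{i=1}^{k-1} ∏_{p ∈ D_i ∩ D_{i+1}} (1 - w̃t(p)⁻¹)`. -/
def weakSum (wt wte : ℤ × ℕ → F) (n k : ℕ) : F :=
  ∑ D ∈ weakTuples n k,
    (∏ i : Fin k, wtVal wt wte (-(n : ℤ) - 2 * (i : ℕ)) (D i)) *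
      ∏ j : Fin (k - 1),
        interProd (fun p => 1 - (wte p)⁻¹) (n + 2 * (j : ℕ)) (n + 2 * ((j : ℕ) + 1))
          (D ⟨(j : ℕ), by have := j.isLt; omega⟩)
          (D ⟨(j : ℕ) + 1, by have := j.isLt; omega⟩)

/-- The sum over `(D₁ < ⋯ < D_k) ∈ Dyck^k_{2n}` of `wt_V(D₁)⋯wt_V(D_k)`. -/
def strictSum (wt wte : ℤ × ℕ → F) (n k : ℕ) : F :=
  ∑ D ∈ strictTuples n k, ∏ i : Fin k, wtVal wt wte (-(n : ℤ) - 2 * (i : ℕ)) (D i)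

end Weights

/-! ### Schröder paths.

A path with `L` steps is encoded by `st : Fin L → Fin 3`
(`0` = up-step `(1,1)`, `1` = down-step `(1,-1)`, `2` = horizontal step `(2,0)`). -/

/-- The horizontal displacement of the `j`-th step. -/
def stepX {L : ℕ} (st : Fin L → Fin 3) (j : ℕ) : ℕ :=
  if h : j < L then (if st ⟨j, h⟩ = 2 then 2 else 1) else 0

/-- The vertical displacement of the `j`-th step. -/
def stepY {L : ℕ} (st : Fin L → Fin 3) (j : ℕ) : ℤ :=
  if h : j < L then (if st ⟨j, h⟩ = 0 then 1 else if st ⟨j, h⟩ = 1 then -1 else 0) else 0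

/-- The horizontal position (relative to the start) after `j` steps. -/
def xpos {L : ℕ} (st : Fin L → Fin 3) (j : ℕ) : ℕ := ∑ t ∈ Finset.range j, stepX st t

/-- The height after `j` steps. -/
def ypos {L : ℕ} (st : Fin L → Fin 3) (j : ℕ) : ℤ := ∑ t ∈ Finset.range j, stepY st t

/-- A (little) Schröder path of horizontal span `2m`: nonnegative heights, ends at
height `0`, and no horizontal step on the `x`-axis. -/
def IsSch (m : ℕ) {L : ℕ} (st : Fin L → Fin 3) : Prop :=
  xpos st L = 2 * m ∧ (∀ j ∈ Finset.range (L + 1), 0 ≤ ypos st j) ∧ ypos st L = 0 ∧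
    ∀ j ∈ Finset.range L, stepX st j = 2 → ypos st j ≠ 0

/-- The height of a Schröder path over the relative abscissa `x` (midpoints of
horizontal steps get the height of that horizontal step). -/
def schHeight {L : ℕ} (st : Fin L → Fin 3) (x : ℕ) : ℤ :=
  ∑ t ∈ Finset.range L, if xpos st (t + 1) ≤ x then stepY st t else 0

/-- The relative abscissa `x` is the midpoint of a horizontal step. -/
def IsHMid {L : ℕ} (st : Fin L → Fin 3) (x : ℕ) : Prop :=
  ∃ j ∈ Finset.range L, stepX st j = 2 ∧ xpos st j + 1 = x

/-- The number of horizontal steps of a Schröder path. -/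
def hsCount {L : ℕ} (st : Fin L → Fin 3) : ℕ :=
  ((Finset.range L).filter fun j => stepX st j = 2).card

/-- `wt_Sch(c, S) = c^{hs(S)} ∏_{p ∈ S} wt(p)` for a Schröder path starting at `(a,0)`. -/
def wtSch {F : Type*} [Field F] (wt : ℤ × ℕ → F) (c : F) (a : ℤ) {L : ℕ}
    (st : Fin L → Fin 3) : F :=
  c ^ hsCount st * ∏ j ∈ Finset.range (L + 1), wt (a + xpos st j, (ypos st j).toNat)

/-- `φ_V(S) = D`: the Dyck path `D` (with `L'` steps) is obtained from the Schröder
path `S` by replacing each horizontal step by a down-step followed by an up-step. -/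
def PhiVEq {L L' : ℕ} (st : Fin L → Fin 3) (s : Fin L' → Bool) : Prop :=
  ∀ x ∈ Finset.range (L' + 1),
    pht s x = schHeight st x - (if IsHMid st x then 1 else 0)

/-- `φ_HP(S) = D`: the Dyck path `D` is obtained from the Schröder path `S` by
replacing each horizontal step by an up-step followed by a down-step. -/
def PhiHPEq {L L' : ℕ} (st : Fin L → Fin 3) (s : Fin L' → Bool) : Prop :=
  ∀ x ∈ Finset.range (L' + 1),
    pht s x = schHeight st x + (if IsHMid st x then 1 else 0)

/-! ### Young diagrams, excited and pleasant diagrams, reverse plane partitions. -/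

/-- The cells (1-based, matrix coordinates) of the staircase `δ_m = (m-1, m-2, …, 1)`. -/
def deltaCells (m : ℕ) : Finset (ℕ × ℕ) :=
  ((Finset.Icc 1 m) ×ˢ (Finset.Icc 1 m)).filter fun c => c.1 + c.2 ≤ m

/-- An excited move inside the Young diagram `lam`. -/
def ExcitedStep (lam : Finset (ℕ × ℕ)) (D D' : Finset (ℕ × ℕ)) : Prop :=
  ∃ i j : ℕ, (i, j) ∈ D ∧ (i + 1, j) ∉ D ∧ (i, j + 1) ∉ D ∧ (i + 1, j + 1) ∉ D ∧
    (i + 1, j + 1) ∈ lam ∧ D' = insert (i + 1, j + 1) (D.erase (i, j))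

/-- `D` is an excited diagram of `lam/mu`. -/
def IsExcited (lam mu D : Finset (ℕ × ℕ)) : Prop :=
  Relation.ReflTransGen (ExcitedStep lam) mu D

/-- `P` is a pleasant diagram of `lam/mu`: a subset of `lam \ D` for an excited diagram `D`. -/
def IsPleasant (lam mu : Finset (ℕ × ℕ)) (P : Finset (ℕ × ℕ)) : Prop :=
  ∃ D, IsExcited lam mu D ∧ P ⊆ lam \ D

/-- `p(lam/mu)`, the number of pleasant diagrams of `lam/mu`. -/
def pleasantCount (lam mu : Finset (ℕ × ℕ)) : ℕ :=
  Set.ncard {P : Finset (ℕ × ℕ) | IsPleasant lam mu P}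

/-- A reverse plane partition on the skew shape `shape`: a filling by nonnegative
integers (vanishing off the shape) weakly increasing along rows and columns. -/
def IsRPP (shape : Finset (ℕ × ℕ)) (f : ℕ × ℕ → ℕ) : Prop :=
  (∀ c, c ∉ shape → f c = 0) ∧
    (∀ i j : ℕ, (i, j) ∈ shape → (i, j + 1) ∈ shape → f (i, j) ≤ f (i, j + 1)) ∧
    ∀ i j : ℕ, (i, j) ∈ shape → (i + 1, j) ∈ shape → f (i, j) ≤ f (i + 1, j)

/-- `∑_{π ∈ RPP(shape)} q^{|π|}` as a formal power series in `q`. -/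
def rppGF (shape : Finset (ℕ × ℕ)) : PowerSeries ℚ :=
  PowerSeries.mk fun N =>
    (Set.ncard {f : ℕ × ℕ → ℕ | IsRPP shape f ∧ ∑ c ∈ shape, f c = N} : ℚ)

/-- `(q; q)_m = ∏_{i=1}^m (1 - q^i)` as a formal power series. -/
def pochPS (m : ℕ) : PowerSeries ℚ :=
  ∏ i ∈ Finset.Icc 1 m, (1 - (PowerSeries.X : PowerSeries ℚ) ^ i)

/-- `E*_N(q) = ∑_{π ∈ Alt_N} q^{maj(κ_N π⁻¹)}` as a formal power series. -/
def EstarPS (N : ℕ) : PowerSeries ℚ :=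
  ∑ π ∈ altPerms N, (PowerSeries.X : PowerSeries ℚ) ^ majKappaInv N π

/-- `E*_m(q)/(q;q)_m` for `m ≥ 0`, and `0` for `m < 0`. -/
def EstarEntry (m : ℤ) : PowerSeries ℚ :=
  if m < 0 then 0 else EstarPS m.toNat * (pochPS m.toNat)⁻¹

/-- The Gaussian binomial coefficient `[N choose M]_q` as a formal power series. -/
def gaussPS (N M : ℕ) : PowerSeries ℚ :=
  pochPS N * (pochPS M * pochPS (N - M))⁻¹

/-!
Collect the numbers `E*_{2n+1}(t) / (t; t)_{2n+1}` and the path sums into generating functions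
in `x`. Both are the quotient of a `q`-sine by a `q`-cosine.

On the side of the permutations, for real `0 < t < 1`, sorting the positions of a sequence with ties
broken by `κ` turns `E*_{2n+1}(t) / (t; t)_{2n+1}` into the sum of `t^{a₀ + ⋯ + a_{2n}}` over the
zigzags `a₀ ≥ a₁ ≤ a₂ ≥ ⋯ ≥ a_{2n}`. Replacing the relations `≤` by `>` one after the other gives a
telescoping sum, which says that `q`-cosine times generating function is `q`-sine.

On the side of the paths, removing the first step gives a three-term recurrence in the starting
height. It determines its solution, and the `q`-sine belongs to a family which solves it.

A transcendental `t` embeds `ℚ(q)` into `ℝ`, so one such `t` in `(0, 1)` suffices.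
-/

/-! ### Weighted chains -/

section Chain

open scoped ENNReal

variable {α : Type*} (w : α → ℝ≥0∞)

/-- The total weight `∏ w(aᵢ)` of the sequences `a₀, …, a_N` in which `r i` relates `aᵢ` to `aᵢ₊₁`
for all `i < N`. Weights are taken in `ℝ≥0∞` so that no summability has to be tracked. -/
def chainTotal (N : ℕ) (r : ℕ → α → α → Prop) : ℝ≥0∞ :=
  ∑' f : Fin (N + 1) → α, if ∀ i : Fin N, r i (f i.castSucc) (f i.succ) then ∏ i, w (f i) else 0

/-- The part of `chainTotal w N r` contributed by the sequences starting with a given entry. -/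
def chainSum : ℕ → (ℕ → α → α → Prop) → α → ℝ≥0∞
  | 0, _, a => w a
  | N + 1, r, a => w a * ∑' b, if r 0 a b then chainSum N (fun i => r (i + 1)) b else 0

theorem chainSum_succ (N : ℕ) (r : ℕ → α → α → Prop) (a : α) :
    chainSum w (N + 1) r a =
      w a * ∑' b, if r 0 a b then chainSum w N (fun i => r (i + 1)) b else 0 :=
  rfl

theorem chainSum_eq_tsum_cons (N : ℕ) (r : ℕ → α → α → Prop) (a : α) :
    chainSum w N r a = ∑' f : Fin N → α,
      if ∀ i : Fin N, r i ((Fin.cons a f : Fin (N + 1) → α) i.castSucc) (f i)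
      then w a * ∏ i, w (f i) else 0 := by
  induction N generalizing r a with
  | zero => simp [chainSum]
  | succ N ih =>
    rw [chainSum, ← (Fin.consEquiv fun _ => α).tsum_eq, ENNReal.tsum_prod', ← ENNReal.tsum_mul_left]
    refine tsum_congr fun b => ?_
    by_cases h : r 0 a b
    · simp [Fin.consEquiv, Fin.forall_fin_succ, Fin.prod_univ_succ, h, ih, ← ENNReal.tsum_mul_left]
    · simp [Fin.consEquiv, Fin.forall_fin_succ, h]

theorem chainTotal_eq_tsum_chainSum (N : ℕ) (r : ℕ → α → α → Prop) :
    chainTotal w N r = ∑' a, chainSum w N r a := by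
  rw [chainTotal, ← (Fin.consEquiv fun _ => α).tsum_eq, ENNReal.tsum_prod']
  refine tsum_congr fun a => ?_
  simp [chainSum_eq_tsum_cons, Fin.consEquiv, Fin.prod_univ_succ]

variable {w} in
theorem chainTotal_congr {N : ℕ} {r r' : ℕ → α → α → Prop}
    (h : ∀ i < N, ∀ a b, r i a b ↔ r' i a b) : chainTotal w N r = chainTotal w N r' :=
  tsum_congr fun _ => if_congr (forall_congr' fun i => h i i.2 _ _) rfl rfl

variable {w} in
theorem chainTotal_ne_top (hw : ∑' a, w a ≠ ⊤) (N : ℕ) (r : ℕ → α → α → Prop) :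
    chainTotal w N r ≠ ⊤ := by
  have chainSum_le (a : α) : chainSum w N r a ≤ w a * (∑' b, w b) ^ N := by
    induction N generalizing r a with
    | zero => simp [chainSum]
    | succ N ih =>
      rw [chainSum, pow_succ', ← ENNReal.tsum_mul_right]
      gcongr with b
      split_ifs
      · exact ih _ b
      · exact bot_le
  rw [chainTotal_eq_tsum_chainSum]
  refine ne_top_of_le_ne_top ?_ (ENNReal.tsum_le_tsum chainSum_le)
  rw [ENNReal.tsum_mul_right]
  exact ENNReal.mul_ne_top hw (ENNReal.pow_ne_top hw)

theorem chainSum_add_chainSum (M p : ℕ) {r r' : ℕ → α → α → Prop}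
    (hr : ∀ i ≠ p, r i = r' i) (hp : ∀ a b, r' p a b ↔ ¬r p a b) (a : α) :
    chainSum w (M + (p + 1)) r a + chainSum w (M + (p + 1)) r' a =
      chainSum w p r a * chainTotal w M (fun i => r (i + (p + 1))) := by
  induction p generalizing r r' a with
  | zero =>
    have tail_eq : (fun i => r' (i + 1)) = fun i => r (i + 1) :=
      funext fun i => (hr (i + 1) i.succ_ne_zero).symm
    simp only [zero_add, chainSum, tail_eq, ← mul_add, ← ENNReal.tsum_add,
      chainTotal_eq_tsum_chainSum]
    congr 1
    refine tsum_congr fun b => ?_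
    by_cases hb : r 0 a b <;> simp [hp, hb]
  | succ p ih =>
    have tail (b : α) := ih (r := fun i => r (i + 1)) (r' := fun i => r' (i + 1))
      (fun i hi => hr (i + 1) (by omega)) hp b
    simp only [← add_assoc] at tail ⊢
    rw [chainSum_succ, chainSum_succ, chainSum_succ, ← hr 0 p.succ_ne_zero.symm, ← mul_add,
      ← ENNReal.tsum_add, mul_assoc, ← ENNReal.tsum_mul_right]
    congr 1
    refine tsum_congr fun b => ?_
    by_cases hb : r 0 a b <;> simp [hb, tail]

/-- Dropping the `p`-th relation cuts a chain into two independent ones. -/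
theorem chainTotal_add_chainTotal (M p : ℕ) {r r' : ℕ → α → α → Prop}
    (hr : ∀ i ≠ p, r i = r' i) (hp : ∀ a b, r' p a b ↔ ¬r p a b) :
    chainTotal w (M + (p + 1)) r + chainTotal w (M + (p + 1)) r' =
      chainTotal w p r * chainTotal w M (fun i => r (i + (p + 1))) := by
  simp only [chainTotal_eq_tsum_chainSum w (M + (p + 1)), chainTotal_eq_tsum_chainSum w p,
    ← ENNReal.tsum_add, chainSum_add_chainSum w M p hr hp, ENNReal.tsum_mul_right]

end Chain

section Decreasing

open scoped ENNReal

theorem tsum_ite_le_pow (x : ℝ≥0∞) (k : ℕ) :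
    (∑' a, if k ≤ a then x ^ a else 0) = x ^ k * (1 - x)⁻¹ := by
  rw [← Summable.sum_add_tsum_nat_add' (k := k) ENNReal.summable,
    sum_eq_zero fun i hi => if_neg (by simpa using hi), zero_add]
  simp [pow_add, mul_comm _ (x ^ k), ENNReal.tsum_mul_left, ENNReal.tsum_geometric]

theorem tsum_pow_mul_tsum_ite_add_le (x : ℝ≥0∞) (d : ℕ) (g : ℕ → ℝ≥0∞) :
    ∑' a, x ^ a * ∑' b, (if b + d ≤ a then g b else 0) =
      x ^ d * (1 - x)⁻¹ * ∑' b, x ^ b * g b := by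
  simp only [← ENNReal.tsum_mul_left]
  rw [ENNReal.tsum_comm]
  refine tsum_congr fun b => ?_
  calc ∑' a, x ^ a * (if b + d ≤ a then g b else 0)
      = (∑' a, if b + d ≤ a then x ^ a else 0) * g b := by
        simp only [← ENNReal.tsum_mul_right, ite_mul, zero_mul, mul_ite, mul_zero]
    _ = x ^ d * (1 - x)⁻¹ * (x ^ b * g b) := by rw [tsum_ite_le_pow, pow_add]; ring

theorem tsum_pow_mul_chainSum_add_le (q : ℝ≥0∞) (N : ℕ) (δ : ℕ → ℕ) (c : ℕ) :
    ∑' a, (q ^ c) ^ a * chainSum (fun a => q ^ a) N (fun i a b => b + δ i ≤ a) a =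
      q ^ (∑ i ∈ range N, (c + 1 + i) * δ i) * ∏ i ∈ range (N + 1), (1 - q ^ (c + 1 + i))⁻¹ := by
  have absorb (c a : ℕ) : (q ^ c) ^ a * q ^ a = (q ^ (c + 1)) ^ a := by rw [← mul_pow, pow_succ]
  induction N generalizing δ c with
  | zero => simp [chainSum, absorb, ENNReal.tsum_geometric]
  | succ N ih =>
    simp only [chainSum, ← mul_assoc, absorb]
    rw [tsum_pow_mul_tsum_ite_add_le, ih _ (c + 1), sum_range_succ',
      prod_range_succ' _ (N + 1), pow_add]
    simp only [add_assoc, add_comm 1, add_zero]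
    ring

theorem chainTotal_add_le (q : ℝ≥0∞) (N : ℕ) (δ : ℕ → ℕ) :
    chainTotal (fun a => q ^ a) N (fun i a b => b + δ i ≤ a) =
      q ^ (∑ i ∈ range N, (i + 1) * δ i) * ∏ i ∈ range (N + 1), (1 - q ^ (i + 1))⁻¹ := by
  simpa [chainTotal_eq_tsum_chainSum, add_comm 1] using tsum_pow_mul_chainSum_add_le q N δ 0

end Decreasing

/-! ### Sorting with labelled ties -/

section LabelKey

open scoped ENNReal

/-- The indicator of a descent of the 1-based word `w` at position `i + 1`. -/
def descentAt (w : ℕ → ℕ) (i : ℕ) : ℕ := if w (i + 2) < w (i + 1) then 1 else 0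

theorem majW_eq_sum_descentAt (N : ℕ) (w : ℕ → ℕ) :
    majW (N + 1) w = ∑ i ∈ range N, (i + 1) * descentAt w i := by
  rw [majW, Nat.add_sub_cancel, ← Ico_add_one_right_eq_Icc, sum_Ico_eq_sum_range,
    Nat.add_sub_cancel]
  simp only [descentAt, add_comm 1, mul_ite, mul_one, mul_zero]

theorem word_val_add_one {N : ℕ} (σ : Equiv.Perm (Fin N)) (i : Fin N) :
    word σ (i + 1) = σ i + 1 := by
  simp [word, Nat.succ_le_of_lt i.2]

/-- The key for sorting the positions of `f`: entries decrease, ties are broken by increasing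
labels `ω` of the 1-based positions. -/
def labelKey (ω : ℕ → ℕ) {N : ℕ} (f : Fin N → ℕ) (i : Fin N) : ℕᵒᵈ ×ₗ ℕ :=
  toLex (OrderDual.toDual (f i), ω (i + 1))

variable {ω : ℕ → ℕ} {N : ℕ}

theorem labelKey_lt_iff (f : Fin N → ℕ) (i j : Fin N) :
    labelKey ω f i < labelKey ω f j ↔ f j < f i ∨ f i = f j ∧ ω (i + 1) < ω (j + 1) := by
  simp [labelKey, Prod.Lex.toLex_lt_toLex]

theorem label_injective (hω : Set.InjOn ω (Set.Icc 1 N)) :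
    Function.Injective fun i : Fin N => ω (i + 1) := fun i j h =>
  Fin.ext <| Nat.succ_injective <| hω ⟨by simp, i.2⟩ ⟨by simp, j.2⟩ h

theorem labelKey_injective (hω : Set.InjOn ω (Set.Icc 1 N)) (f : Fin N → ℕ) :
    Function.Injective (labelKey ω f) := fun _ _ h =>
  label_injective hω (congrArg (fun p => (ofLex p).2) h)

theorem eq_sort_iff_strictMono {α : Type*} [LinearOrder α] {g : Fin N → α}
    (hg : Function.Injective g) {σ : Equiv.Perm (Fin N)} :
    σ = Tuple.sort g ↔ StrictMono (g ∘ σ) := by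
  rw [Tuple.eq_sort_iff]
  refine ⟨fun h => h.1.strictMono_of_injective (hg.comp σ.injective), fun h => ?_⟩
  exact ⟨h.monotone, fun i j hij e => absurd (σ.injective (hg e)) hij.ne⟩

theorem strictMono_labelKey_comp_iff (hω : Set.InjOn ω (Set.Icc 1 (N + 1)))
    (f : Fin (N + 1) → ℕ) (σ : Equiv.Perm (Fin (N + 1))) :
    StrictMono (labelKey ω f ∘ σ) ↔
      ∀ i : Fin N, f (σ i.succ) + descentAt (fun j => ω (word σ j)) i ≤ f (σ i.castSucc) := by
  rw [Fin.strictMono_iff_lt_succ]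
  refine forall_congr' fun i => ?_
  have label_ne : ω (σ i.castSucc + 1) ≠ ω (σ i.succ + 1) :=
    (label_injective hω).ne (σ.injective.ne Fin.castSucc_lt_succ.ne)
  have word_castSucc : word σ (i + 1) = σ i.castSucc + 1 := word_val_add_one σ i.castSucc
  have word_succ : word σ (i + 2) = σ i.succ + 1 := word_val_add_one σ i.succ
  rw [Function.comp_apply, Function.comp_apply, labelKey_lt_iff, descentAt, word_castSucc,
    word_succ]
  split_ifs <;> omega

theorem tsum_strictMono_labelKey_comp (hω : Set.InjOn ω (Set.Icc 1 (N + 1))) (q : ℝ≥0∞)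
    (σ : Equiv.Perm (Fin (N + 1))) :
    (∑' f : Fin (N + 1) → ℕ, if StrictMono (labelKey ω f ∘ σ) then ∏ i, q ^ f i else 0) =
      q ^ majW (N + 1) (fun j => ω (word σ j)) * ∏ i ∈ range (N + 1), (1 - q ^ (i + 1))⁻¹ := by
  rw [majW_eq_sum_descentAt, ← chainTotal_add_le, chainTotal,
    ← (Equiv.arrowCongr σ (Equiv.refl ℕ)).tsum_eq]
  refine tsum_congr fun f => ?_
  simp [strictMono_labelKey_comp_iff hω, Equiv.prod_comp σ.symm fun i => q ^ f i]

/-- The fundamental lemma of `P`-partitions: sorting a sequence by `labelKey` groups the sequences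
by permutations, and each group contributes `q ^ maj / (q; q)`. -/
theorem tsum_sort_labelKey (hω : Set.InjOn ω (Set.Icc 1 (N + 1))) (q : ℝ≥0∞)
    (S : Finset (Equiv.Perm (Fin (N + 1)))) :
    (∑' f : Fin (N + 1) → ℕ, if (Tuple.sort (labelKey ω f)).symm ∈ S then ∏ i, q ^ f i else 0) =
      (∑ π ∈ S, q ^ majW (N + 1) fun j => ω (word π.symm j)) *
        ∏ i ∈ range (N + 1), (1 - q ^ (i + 1))⁻¹ := by
  simp only [sum_mul, ← tsum_strictMono_labelKey_comp hω]
  rw [← Summable.tsum_finsetSum fun _ _ => ENNReal.summable]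
  refine tsum_congr fun f => ?_
  have strictMono_iff (π : Equiv.Perm (Fin (N + 1))) :
      StrictMono (labelKey ω f ∘ π.symm) ↔ (Tuple.sort (labelKey ω f)).symm = π := by
    rw [← eq_sort_iff_strictMono (labelKey_injective hω f)]
    exact ⟨fun h => by rw [← h, π.symm_symm], fun h => by rw [← h, Equiv.symm_symm]⟩
  simp only [strictMono_iff, sum_ite_eq]

end LabelKey

/-! ### Alternating permutations and zigzags -/

section Zigzag

open scoped ENNReal

/-- The relations `a₀ ≥ a₁ ≤ a₂ ≥ a₃ ≤ ⋯` between the consecutive entries of a zigzag, the first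
`j` of the relations `≤` being replaced by `>`. -/
def zigzagRel (j i a b : ℕ) : Prop :=
  if i % 2 = 0 then b ≤ a else if i < 2 * j then b < a else a ≤ b

theorem kappaNat_injOn (N : ℕ) : Set.InjOn (kappaNat N) (Set.Icc 1 N) := by
  rintro i ⟨-, hi⟩ j ⟨-, hj⟩ h
  unfold kappaNat at h
  split_ifs at h <;> omega

theorem kappaNat_lt_of_adjacent {N i j : ℕ} (hi : i ≤ N) (hj : j ∈ Set.Icc 1 N)
    (hodd : i % 2 = 1) (hij : j = i + 1 ∨ i = j + 1) : kappaNat N i < kappaNat N j := by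
  obtain ⟨hj1, hjN⟩ := hj
  unfold kappaNat
  split_ifs <;> omega

theorem isAltW_word_iff {N : ℕ} (π : Equiv.Perm (Fin (N + 1))) :
    IsAltW (N + 1) (word π) ↔
      ∀ i : Fin N,
        if (i : ℕ) % 2 = 0 then π i.castSucc < π i.succ else π i.succ < π i.castSucc := by
  have step (i : Fin N) :
      ((((i : ℕ) + 1) % 2 = 1 → word π (i + 1) < word π (i + 1 + 1)) ∧
        (((i : ℕ) + 1) % 2 = 0 → word π (i + 1 + 1) < word π (i + 1))) ↔
      if (i : ℕ) % 2 = 0 then π i.castSucc < π i.succ else π i.succ < π i.castSucc := by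
    have word_castSucc : word π (i + 1) = π i.castSucc + 1 := word_val_add_one π i.castSucc
    have word_succ : word π (i + 1 + 1) = π i.succ + 1 := word_val_add_one π i.succ
    rw [word_castSucc, word_succ, Fin.lt_def, Fin.lt_def]
    split_ifs <;> omega
  simp only [← step, IsAltW, Nat.add_sub_cancel, mem_Icc]
  refine ⟨fun h i => h (i + 1) ⟨by simp, i.2⟩, fun h i hi => ?_⟩
  obtain ⟨k, rfl⟩ := Nat.exists_eq_add_of_le' hi.1
  exact h ⟨k, hi.2⟩

theorem isAltW_word_iff_zigzagRel {N : ℕ} (π : Equiv.Perm (Fin (N + 1))) (f : Fin (N + 1) → ℕ)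
    (h : StrictMono (labelKey (kappaNat (N + 1)) f ∘ π.symm)) :
    IsAltW (N + 1) (word π) ↔ ∀ i : Fin N, zigzagRel 0 i (f i.castSucc) (f i.succ) := by
  have lt_iff_le (x y : Fin (N + 1)) (hx : (x : ℕ) % 2 = 0)
      (hxy : (y : ℕ) = x + 1 ∨ (x : ℕ) = y + 1) : π x < π y ↔ f y ≤ f x := by
    have label_lt : kappaNat (N + 1) (x + 1) < kappaNat (N + 1) (y + 1) :=
      kappaNat_lt_of_adjacent x.2 ⟨by simp, y.2⟩ (by omega) (by omega)
    have lt_iff_key := h.lt_iff_lt (a := π x) (b := π y)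
    simp only [Function.comp_apply, π.symm_apply_apply, labelKey_lt_iff] at lt_iff_key
    rw [← lt_iff_key]
    omega
  rw [isAltW_word_iff]
  refine forall_congr' fun i => ?_
  simp only [zigzagRel, mul_zero, not_lt_zero, if_false]
  split_ifs with hi
  · exact lt_iff_le i.castSucc i.succ hi (Or.inl rfl)
  · exact lt_iff_le i.succ i.castSucc (by rw [Fin.val_succ]; omega) (Or.inr rfl)

theorem chainTotal_zigzagRel_zero (q : ℝ≥0∞) (N : ℕ) :
    chainTotal (fun a => q ^ a) N (zigzagRel 0) =
      (∑ π ∈ altPerms (N + 1), q ^ majKappaInv (N + 1) π) *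
        ∏ i ∈ range (N + 1), (1 - q ^ (i + 1))⁻¹ := by
  have hκ := kappaNat_injOn (N + 1)
  simp only [majKappaInv, ← tsum_sort_labelKey hκ]
  refine tsum_congr fun f => if_congr ?_ rfl rfl
  have sorted : StrictMono (labelKey (kappaNat (N + 1)) f ∘ Tuple.sort _) :=
    (eq_sort_iff_strictMono (labelKey_injective hκ f)).1 rfl
  rw [altPerms, mem_filter_univ]
  exact (isAltW_word_iff_zigzagRel (Tuple.sort (labelKey (kappaNat (N + 1)) f)).symm f sorted).symm

theorem sum_range_succ_mul_mod_two (j : ℕ) :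
    ∑ i ∈ range (2 * j), (i + 1) * (i % 2) = j * (j + 1) := by
  induction j with
  | zero => rfl
  | succ j ih =>
    rw [mul_add_one, sum_range_succ, sum_range_succ, ih, Nat.mul_mod_right,
      Nat.mul_add_mod_self_left]
    ring

theorem zigzagRel_iff_add_mod_two_le {j i : ℕ} (hi : i ≤ 2 * j) (a b : ℕ) :
    zigzagRel j i a b ↔ b + i % 2 ≤ a := by
  unfold zigzagRel
  split_ifs <;> omega

theorem chainTotal_zigzagRel_self (q : ℝ≥0∞) (n : ℕ) :
    chainTotal (fun a => q ^ a) (2 * n) (zigzagRel n) =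
      q ^ (n * (n + 1)) * ∏ i ∈ range (2 * n + 1), (1 - q ^ (i + 1))⁻¹ := by
  rw [chainTotal_congr fun i hi => zigzagRel_iff_add_mod_two_le hi.le, chainTotal_add_le,
    sum_range_succ_mul_mod_two]

theorem chainTotal_zigzagRel_add (q : ℝ≥0∞) (m j : ℕ) :
    chainTotal (fun a => q ^ a) (2 * (m + j + 1)) (zigzagRel j) +
        chainTotal (fun a => q ^ a) (2 * (m + j + 1)) (zigzagRel (j + 1)) =
      q ^ (j * (j + 1)) * (∏ i ∈ range (2 * j + 2), (1 - q ^ (i + 1))⁻¹) *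
        chainTotal (fun a => q ^ a) (2 * m) (zigzagRel 0) := by
  have agree (i : ℕ) (hi : i ≠ 2 * j + 1) : zigzagRel j i = zigzagRel (j + 1) i := by
    funext a b
    unfold zigzagRel
    split_ifs <;> first | rfl | omega
  have complementary (a b : ℕ) :
      zigzagRel (j + 1) (2 * j + 1) a b ↔ ¬zigzagRel j (2 * j + 1) a b := by
    unfold zigzagRel
    split_ifs <;> omega
  have tail (i : ℕ) (_ : i < 2 * m) (a b : ℕ) :
      zigzagRel j (i + (2 * j + 1 + 1)) a b ↔ zigzagRel 0 i a b := by
    unfold zigzagRel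
    split_ifs <;> omega
  rw [show 2 * (m + j + 1) = 2 * m + (2 * j + 1 + 1) by ring,
    chainTotal_add_chainTotal _ _ _ agree complementary, chainTotal_congr tail,
    chainTotal_congr fun i hi => zigzagRel_iff_add_mod_two_le (Nat.lt_succ_iff.1 hi),
    chainTotal_add_le, sum_range_succ, sum_range_succ_mul_mod_two, Nat.mul_mod_right, mul_zero,
    add_zero]

end Zigzag

/-! ### The `q`-sine and its contiguous relations -/

section QTrigonometric

open PowerSeries

variable {K : Type*} [Field K]

/-- The `q`-Pochhammer symbol `(t; t)_k`. -/
def qPochhammer (t : K) (k : ℕ) : K := ∏ i ∈ range k, (1 - t ^ (i + 1))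

theorem qPochhammer_succ (t : K) (k : ℕ) :
    qPochhammer t (k + 1) = qPochhammer t k * (1 - t ^ (k + 1)) :=
  prod_range_succ _ _

theorem prod_Icc_one_sub_pow (t : K) (k : ℕ) : ∏ i ∈ Icc 1 k, (1 - t ^ i) = qPochhammer t k := by
  rw [← Ico_add_one_right_eq_Icc, prod_Ico_eq_prod_range, Nat.add_sub_cancel, qPochhammer]
  simp only [add_comm 1]

/-- The series `∑ (-1)^m t^{m(m-1)} x^m / (t; t)_{2m}`, a `q`-cosine in the variable `√x`. -/
def cosSeries (t : K) : K⟦X⟧ :=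
  mk fun m => (-1) ^ m * t ^ (m * (m - 1)) / qPochhammer t (2 * m)

/-- The `q`-Pochhammer symbol `(t^{2m+2}; t²)_h = ∏_{i=1}^h (1 - t^{2m+2i})`. -/
def evenProd (t : K) (m h : ℕ) : K := ∏ i ∈ range h, (1 - t ^ (2 * m + 2 * i + 2))

/-- The series `∑ (-1)^m t^{m(m+1)} (t^{2m+2}; t²)_h x^m / (t; t)_{2m+2h+1}`; for `h = 0` it is a
`q`-sine in the variable `√x`, divided by `√x`. -/
def sinSeries (t : K) (h : ℕ) : K⟦X⟧ :=
  mk fun m => (-1) ^ m * t ^ (m * (m + 1)) * evenProd t m h / qPochhammer t (2 * m + 2 * h + 1)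

/-- The contiguous relations of the family `sinSeries t`, with inhomogeneous term `c`. -/
structure IsContiguous (t : K) (c : K⟦X⟧) (f : ℕ → K⟦X⟧) : Prop where
  zero : C (1 - t) * f 0 = c + X * f 1
  succ (h : ℕ) : (C (1 - t ^ (2 * h + 3)) + X) * f (h + 1) = f h + X * f (h + 2)

theorem evenProd_succ (t : K) (m h : ℕ) :
    evenProd t m (h + 1) = evenProd t m h * (1 - t ^ (2 * m + 2 * h + 2)) :=
  prod_range_succ _ _

theorem evenProd_succ' (t : K) (m h : ℕ) :
    evenProd t m (h + 1) = evenProd t (m + 1) h * (1 - t ^ (2 * m + 2)) := by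
  rw [evenProd, prod_range_succ', evenProd]
  congr! 4
  ring

theorem cosSeries_ne_zero (t : K) : cosSeries t ≠ 0 := fun h => by
  simpa [cosSeries, qPochhammer] using congrArg (coeff 0) h

variable {t : K}

theorem qPochhammer_ne_zero (ht : ∀ k : ℕ, 1 - t ^ (k + 1) ≠ 0) (k : ℕ) : qPochhammer t k ≠ 0 :=
  prod_ne_zero_iff.2 fun i _ => ht i

theorem sinSeries_zero_contiguous (ht : ∀ k : ℕ, 1 - t ^ (k + 1) ≠ 0) :
    C (1 - t) * sinSeries t 0 = cosSeries t + X * sinSeries t 1 := by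
  ext m
  rcases m with _ | m
  · have one_sub_ne_zero : 1 - t ≠ 0 := by simpa using ht 0
    simp [sinSeries, cosSeries, evenProd, qPochhammer, one_sub_ne_zero]
  · have poch_ne_zero := qPochhammer_ne_zero ht (2 * m + 2)
    have factor_ne_zero := ht (2 * m + 2)
    simp only [coeff_C_mul, map_add, coeff_succ_X_mul, sinSeries, cosSeries, coeff_mk, mul_zero,
      add_zero, mul_add_one, mul_one, qPochhammer_succ t (2 * m + 2), Nat.add_sub_cancel, evenProd,
      prod_range_zero, prod_range_one]
    field_simp
    ring

theorem sinSeries_succ_contiguous (ht : ∀ k : ℕ, 1 - t ^ (k + 1) ≠ 0) (h : ℕ) :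
    (C (1 - t ^ (2 * h + 3)) + X) * sinSeries t (h + 1) =
      sinSeries t h + X * sinSeries t (h + 2) := by
  ext m
  rcases m with _ | m
  · have poch_ne_zero := qPochhammer_ne_zero ht (2 * h + 1)
    have factor_ne_zero := ht (2 * h + 1)
    have factor_ne_zero' := ht (2 * h + 2)
    have poch_add_three : qPochhammer t (2 * h + 3) =
        qPochhammer t (2 * h + 1) * (1 - t ^ (2 * h + 2)) * (1 - t ^ (2 * h + 3)) := by
      rw [qPochhammer_succ, qPochhammer_succ]
    simp only [add_mul, map_add, coeff_C_mul, sinSeries, coeff_mk, coeff_zero_X_mul, mul_zero,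
      zero_add, mul_add_one, add_assoc, Nat.reduceAdd, poch_add_three, evenProd_succ]
    field_simp
  · have poch_ne_zero := qPochhammer_ne_zero ht (2 * m + 2 * h + 3)
    have factor_ne_zero := ht (2 * m + 2 * h + 3)
    have factor_ne_zero' := ht (2 * m + 2 * h + 4)
    have poch_add_five : qPochhammer t (2 * m + 2 * h + 5) = qPochhammer t (2 * m + 2 * h + 3) *
        (1 - t ^ (2 * m + 2 * h + 4)) * (1 - t ^ (2 * m + 2 * h + 5)) := by
      rw [qPochhammer_succ, qPochhammer_succ]
    simp only [add_mul, map_add, coeff_C_mul, sinSeries, coeff_mk, coeff_succ_X_mul]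
    rw [evenProd_succ' t m (h + 1), evenProd_succ' t m h, evenProd_succ t (m + 1) h,
      show 2 * (m + 1) + 2 * (h + 1) + 1 = 2 * m + 2 * h + 5 by ring,
      show 2 * (m + 1) + 2 * h + 1 = 2 * m + 2 * h + 3 by ring,
      show 2 * m + 2 * (h + 2) + 1 = 2 * m + 2 * h + 5 by ring,
      show 2 * m + 2 * (h + 1) + 1 = 2 * m + 2 * h + 3 by ring, poch_add_five]
    field_simp
    ring

theorem isContiguous_sinSeries (ht : ∀ k : ℕ, 1 - t ^ (k + 1) ≠ 0) :
    IsContiguous t (cosSeries t) (sinSeries t) :=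
  ⟨sinSeries_zero_contiguous ht, sinSeries_succ_contiguous ht⟩

namespace IsContiguous

variable {c : K⟦X⟧} {f g : ℕ → K⟦X⟧}

theorem mul_right (hf : IsContiguous t c f) (a : K⟦X⟧) :
    IsContiguous t (c * a) fun h => f h * a where
  zero := by linear_combination a * hf.zero
  succ h := by linear_combination a * hf.succ h

theorem sub (hf : IsContiguous t c f) (hg : IsContiguous t c g) :
    IsContiguous t 0 (f - g) where
  zero := by simp only [Pi.sub_apply]; linear_combination hf.zero - hg.zero
  succ h := by simp only [Pi.sub_apply]; linear_combination hf.succ h - hg.succ h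

/-- The relations determine `f` one order in `x` at a time, since multiplication by `x` kills the
terms of higher index `h`. -/
theorem X_pow_dvd (ht : ∀ k : ℕ, 1 - t ^ (k + 1) ≠ 0) (hf : IsContiguous t 0 f) (m h : ℕ) :
    X ^ m ∣ f h := by
  induction m generalizing h with
  | zero => simp
  | succ m dvd_f =>
    have dvd_X_mul (h : ℕ) : (X : K⟦X⟧) ^ (m + 1) ∣ X * f h :=
      pow_succ' (X : K⟦X⟧) m ▸ mul_dvd_mul_left X (dvd_f h)
    have isUnit_zero : IsUnit (C (1 - t)) :=
      isUnit_iff_constantCoeff.2 (by simpa using ht 0)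
    have isUnit_succ (h : ℕ) : IsUnit (C (1 - t ^ (2 * h + 3)) + X) :=
      isUnit_iff_constantCoeff.2 (by simpa using ht (2 * h + 2))
    induction h with
    | zero =>
      rw [← isUnit_zero.dvd_mul_left, hf.zero, zero_add]
      exact dvd_X_mul 1
    | succ h ih =>
      rw [← (isUnit_succ h).dvd_mul_left, hf.succ]
      exact dvd_add ih (dvd_X_mul (h + 2))

theorem unique (ht : ∀ k : ℕ, 1 - t ^ (k + 1) ≠ 0) (hf : IsContiguous t c f)
    (hg : IsContiguous t c g) : f = g := by
  ext h m
  rw [← sub_eq_zero, ← map_sub]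
  exact X_pow_dvd_iff.1 ((hf.sub hg).X_pow_dvd ht (m + 1) h) m m.lt_succ_self

end IsContiguous

end QTrigonometric

/-! ### Weighted lattice paths -/

section Paths

/-- The vertical displacement of an up-step (`true`) or of a down-step (`false`). -/
def bitVal (b : Bool) : ℤ := if b then 1 else -1

theorem stepVal_cons_zero {L : ℕ} (b : Bool) (s : Fin L → Bool) :
    stepVal (Fin.cons b s : Fin (L + 1) → Bool) 0 = bitVal b := by
  simp [stepVal, bitVal]

theorem stepVal_cons_succ {L : ℕ} (b : Bool) (s : Fin L → Bool) (j : ℕ) :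
    stepVal (Fin.cons b s : Fin (L + 1) → Bool) (j + 1) = stepVal s j := by
  simp only [stepVal, Nat.add_lt_add_iff_right]
  rfl

theorem pht_zero {L : ℕ} (s : Fin L → Bool) : pht s 0 = 0 := sum_range_zero _

theorem pht_cons_succ {L : ℕ} (b : Bool) (s : Fin L → Bool) (j : ℕ) :
    pht (Fin.cons b s : Fin (L + 1) → Bool) (j + 1) = bitVal b + pht s j := by
  simp only [pht, sum_range_succ', stepVal_cons_succ, stepVal_cons_zero, add_comm]

/-- The nonnegative lattice paths with `L` steps from height `h` to height `0`. -/
def pathsFrom (h : ℤ) (L : ℕ) : Finset (Fin L → Bool) :=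
  univ.filter fun s => (∀ i ∈ range (L + 1), 0 ≤ h + pht s i) ∧ h + pht s L = 0

theorem mem_pathsFrom {h : ℤ} {L : ℕ} {s : Fin L → Bool} :
    s ∈ pathsFrom h L ↔ (∀ i ∈ range (L + 1), 0 ≤ h + pht s i) ∧ h + pht s L = 0 := by
  simp [pathsFrom]

theorem dyckPaths_eq_pathsFrom (L : ℕ) : dyckPaths L = pathsFrom 0 L := by
  simp [dyckPaths, pathsFrom, IsDyck]

theorem cons_mem_pathsFrom {h : ℤ} {L : ℕ} {c : Bool} {s : Fin L → Bool} :
    (Fin.cons c s : Fin (L + 1) → Bool) ∈ pathsFrom h (L + 1) ↔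
      0 ≤ h ∧ s ∈ pathsFrom (h + bitVal c) L := by
  simp only [mem_pathsFrom, mem_range, Nat.forall_lt_succ_left, pht_zero, add_zero,
    pht_cons_succ, ← add_assoc, and_assoc]

theorem pathsFrom_eq_empty_of_neg {h : ℤ} (hh : h < 0) (L : ℕ) : pathsFrom h L = ∅ :=
  eq_empty_of_forall_notMem fun s hs => hh.not_ge <| by
    simpa [pht_zero] using (mem_pathsFrom.1 hs).1 0 (mem_range.2 L.succ_pos)

theorem sum_pathsFrom_succ {M : Type*} [AddCommMonoid M] {h : ℤ} (hh : 0 ≤ h) (L : ℕ)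
    (F : (Fin (L + 1) → Bool) → M) :
    ∑ s ∈ pathsFrom h (L + 1), F s =
      ∑ s ∈ pathsFrom (h + 1) L, F (Fin.cons true s) +
        ∑ s ∈ pathsFrom (h - 1) L, F (Fin.cons false s) := by
  have filter_cons (c : Bool) : pathsFrom (h + bitVal c) L = univ.filter fun s =>
      (Fin.cons c s : Fin (L + 1) → Bool) ∈ pathsFrom h (L + 1) := by
    ext s; simp [cons_mem_pathsFrom, hh]
  rw [← filter_univ_mem (pathsFrom h (L + 1)), sum_filter,
    ← (Fin.consEquiv fun _ => Bool).sum_comp, Fintype.sum_prod_type, Fintype.sum_bool,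
    show h + 1 = h + bitVal true from rfl, show h - 1 = h + bitVal false from rfl,
    filter_cons, filter_cons, sum_filter, sum_filter]
  rfl

/-- The step arriving at the `i`-th point of a path whose first step is preceded by a step `b`. -/
def prevStep {L : ℕ} (b : Bool) (s : Fin L → Bool) (i : ℕ) : ℤ :=
  if i = 0 then bitVal b else stepVal s (i - 1)

theorem prevStep_zero {L : ℕ} (b : Bool) (s : Fin L → Bool) : prevStep b s 0 = bitVal b := rfl

theorem prevStep_cons_succ {L : ℕ} (b c : Bool) (s : Fin L → Bool) (i : ℕ) :
    prevStep b (Fin.cons c s : Fin (L + 1) → Bool) (i + 1) = prevStep c s i := by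
  rcases i with _ | i
  · simp [prevStep, stepVal_cons_zero]
  · simp [prevStep, stepVal_cons_succ]

variable {K : Type*} [Field K]

/-- The weight `1 / (1 - t^{2h+1})` of a lattice point at height `h`. -/
def pointWt (t : K) (h : ℤ) : K := (1 - t ^ (2 * h + 1))⁻¹

/-- The extra weight of a point at height `h` between steps `a` and `b`: `t^{2h+1}` at a high peak,
`1` elsewhere. -/
def peakWt (t : K) (a b h : ℤ) : K := if (a = 1 ∧ b = -1) ∧ 2 ≤ h then t ^ (2 * h + 1) else 1

/-- The weight of a path starting at height `h`. The step `b` preceding it decides whether its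
starting point is a peak. -/
def pathWt (t : K) (b : Bool) (h : ℤ) {L : ℕ} (s : Fin L → Bool) : K :=
  (∏ i ∈ range L, peakWt t (prevStep b s i) (stepVal s i) (h + pht s i)) *
    ∏ i ∈ range (L + 1), pointWt t (h + pht s i)

/-- The total weight of `pathsFrom h L`, the paths being preceded by the step `b`. -/
def pathSum (t : K) (b : Bool) (h : ℤ) (L : ℕ) : K := ∑ s ∈ pathsFrom h L, pathWt t b h s

theorem pathWt_cons (t : K) (b c : Bool) (h : ℤ) {L : ℕ} (s : Fin L → Bool) :
    pathWt t b h (Fin.cons c s : Fin (L + 1) → Bool) =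
      pointWt t h * (peakWt t (bitVal b) (bitVal c) h * pathWt t c (h + bitVal c) s) := by
  rw [pathWt, prod_range_succ' _ L, prod_range_succ' _ (L + 1), pathWt]
  simp only [prevStep_cons_succ, stepVal_cons_succ, pht_cons_succ, prevStep_zero,
    stepVal_cons_zero, pht_zero, add_zero, ← add_assoc]
  ring

theorem pathSum_zero (t : K) (b : Bool) (h : ℤ) :
    pathSum t b h 0 = if h = 0 then pointWt t 0 else 0 := by
  rcases eq_or_ne h 0 with rfl | hh
  · simp [pathSum, pathsFrom, pathWt, pht_zero]
  · simp [pathSum, pathsFrom, pht_zero, hh]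

theorem pathSum_of_neg (t : K) (b : Bool) {h : ℤ} (hh : h < 0) (L : ℕ) : pathSum t b h L = 0 := by
  rw [pathSum, pathsFrom_eq_empty_of_neg hh, sum_empty]

theorem pathSum_succ (t : K) (b : Bool) {h : ℤ} (hh : 0 ≤ h) (L : ℕ) :
    pathSum t b h (L + 1) = pointWt t h * (pathSum t true (h + 1) L +
      peakWt t (bitVal b) (-1) h * pathSum t false (h - 1) L) := by
  have peakWt_up : peakWt t (bitVal b) (bitVal true) h = 1 := by simp [peakWt, bitVal]
  simp only [pathSum, sum_pathsFrom_succ hh, pathWt_cons, ← mul_sum, peakWt_up, one_mul, mul_add]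
  rfl

theorem pathSum_eq_zero_of_lt (t : K) (b : Bool) {h : ℤ} {L : ℕ} (hL : L < h) :
    pathSum t b h L = 0 := by
  induction L generalizing b h with
  | zero => rw [pathSum_zero, if_neg (by omega)]
  | succ L ih => rw [pathSum_succ t b (by omega), ih _ (by omega), ih _ (by omega)]; simp

theorem pathSum_true_one (t : K) (L : ℕ) : pathSum t true 1 L = pathSum t false 1 L := by
  rcases L with _ | L
  · simp [pathSum_zero]
  · simp [pathSum_succ, peakWt]

variable {t : K}

theorem zpow_two_mul_natCast_add_one (t : K) (h : ℕ) : t ^ (2 * (h : ℤ) + 1) = t ^ (2 * h + 1) :=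
  mod_cast zpow_natCast t (2 * h + 1)

theorem one_sub_pow_mul_pathSum_succ (ht : ∀ k : ℕ, 1 - t ^ (k + 1) ≠ 0) (b : Bool) (h L : ℕ) :
    (1 - t ^ (2 * h + 1)) * pathSum t b h (L + 1) = pathSum t true (h + 1) L +
      peakWt t (bitVal b) (-1) h * pathSum t false (h - 1) L := by
  rw [pathSum_succ t b h.cast_nonneg, pointWt, zpow_two_mul_natCast_add_one]
  exact mul_inv_cancel_left₀ (ht (2 * h)) _

theorem one_sub_pow_mul_pathSum_false_succ (ht : ∀ k : ℕ, 1 - t ^ (k + 1) ≠ 0) (h L : ℕ) :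
    (1 - t ^ (2 * h + 1)) * pathSum t false h (L + 1) =
      pathSum t true (h + 1) L + pathSum t false (h - 1) L := by
  simp [one_sub_pow_mul_pathSum_succ ht, peakWt, bitVal]

/-- A preceding up-step multiplies the weight of the paths starting with a down-step by `t^{2h+1}`.
Since `1 - t^{2h+1}` is the inverse of the weight of the starting point, this amounts to removing
these paths together with their starting point. -/
theorem pathSum_true_succ_eq_sub (ht : ∀ k : ℕ, 1 - t ^ (k + 1) ≠ 0) (h L : ℕ) (hh : 2 ≤ h) :
    pathSum t true h (L + 1) = pathSum t false h (L + 1) - pathSum t false (h - 1) L := by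
  have peakWt_high : peakWt t (bitVal true) (-1) h = t ^ (2 * h + 1) := by
    rw [peakWt, if_pos ⟨⟨rfl, rfl⟩, mod_cast hh⟩, zpow_two_mul_natCast_add_one]
  have after_up := one_sub_pow_mul_pathSum_succ ht true h L
  have after_down := one_sub_pow_mul_pathSum_false_succ ht h L
  rw [peakWt_high] at after_up
  apply mul_left_cancel₀ (ht (2 * h))
  linear_combination after_up - after_down

open PowerSeries

/-- The generating function, by half the excess length, of the weighted paths from height `h`
to height `0` preceded by a down-step. -/
def pathSeries (t : K) (h : ℕ) : K⟦X⟧ := mk fun m => pathSum t false h (h + 2 * m)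

theorem pathSeries_zero_contiguous (ht : ∀ k : ℕ, 1 - t ^ (k + 1) ≠ 0) :
    C (1 - t) * pathSeries t 0 = 1 + X * pathSeries t 1 := by
  ext m
  rcases m with _ | m
  · have one_sub_ne_zero : 1 - t ≠ 0 := by simpa using ht 0
    simp [pathSeries, pathSum_zero, pointWt, one_sub_ne_zero]
  · have recurrence := one_sub_pow_mul_pathSum_false_succ ht 0 (1 + 2 * m)
    simp only [Nat.cast_zero, zero_add, pathSum_true_one, zero_sub,
      pathSum_of_neg t _ neg_one_lt_zero, mul_zero, pow_one, add_zero] at recurrence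
    simp only [coeff_C_mul, map_add, coeff_succ_X_mul, pathSeries, coeff_mk, coeff_one,
      Nat.cast_zero, Nat.cast_one, zero_add]
    rw [show 2 * (m + 1) = 1 + 2 * m + 1 by ring, recurrence, if_neg m.succ_ne_zero, zero_add]

theorem pathSeries_succ_contiguous (ht : ∀ k : ℕ, 1 - t ^ (k + 1) ≠ 0) (h : ℕ) :
    (C (1 - t ^ (2 * h + 3)) + X) * pathSeries t (h + 1) =
      pathSeries t h + X * pathSeries t (h + 2) := by
  ext m
  rcases m with _ | m
  · have recurrence := one_sub_pow_mul_pathSum_false_succ ht (h + 1) h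
    rw [pathSum_eq_zero_of_lt t true (by omega)] at recurrence
    simpa [pathSeries, add_mul, mul_add_one, add_assoc] using recurrence
  · have recurrence := one_sub_pow_mul_pathSum_false_succ ht (h + 1) (h + 2 * m + 2)
    have recurrence_up := pathSum_true_succ_eq_sub ht (h + 2) (h + 2 * m + 1) (by omega)
    simp only [add_mul, map_add, coeff_C_mul, pathSeries, coeff_mk, coeff_succ_X_mul]
    rw [show h + 1 + 2 * (m + 1) = h + 2 * m + 2 + 1 by ring,
      show h + 1 + 2 * m = h + 2 * m + 1 by ring, show h + 2 * (m + 1) = h + 2 * m + 2 by ring,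
      show h + 2 + 2 * m = h + 2 * m + 2 by ring]
    simp only [Nat.cast_add, Nat.cast_one, Nat.cast_ofNat, add_assoc, add_sub_assoc, mul_add_one,
      Int.reduceAdd, Int.reduceSub, Nat.reduceAdd, add_zero] at recurrence recurrence_up ⊢
    linear_combination recurrence + recurrence_up

theorem isContiguous_pathSeries (ht : ∀ k : ℕ, 1 - t ^ (k + 1) ≠ 0) :
    IsContiguous t 1 (pathSeries t) :=
  ⟨pathSeries_zero_contiguous ht, pathSeries_succ_contiguous ht⟩

theorem pathSeries_mul_cosSeries (ht : ∀ k : ℕ, 1 - t ^ (k + 1) ≠ 0) (h : ℕ) :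
    pathSeries t h * cosSeries t = sinSeries t h := by
  have contiguous := (isContiguous_pathSeries ht).mul_right (cosSeries t)
  rw [one_mul] at contiguous
  exact congrFun (contiguous.unique ht (isContiguous_sinSeries ht)) h

theorem zpow_sum₀ {ι : Type*} (ht : t ≠ 0) (S : Finset ι) (e : ι → ℤ) :
    t ^ (∑ i ∈ S, e i) = ∏ i ∈ S, t ^ e i := by
  induction S using Finset.cons_induction with
  | empty => simp
  | cons a S ha ih => rw [sum_cons, prod_cons, zpow_add₀ ht, ih]

theorem prod_peakWt_eq_prod_highPeaks (t : K) {L : ℕ} (s : Fin L → Bool) :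
    ∏ i ∈ range L, peakWt t (prevStep false s i) (stepVal s i) (pht s i) =
      ∏ i ∈ highPeaks s, t ^ (2 * pht s i + 1) := by
  rw [highPeaks, peaks, filter_filter, prod_filter]
  refine (prod_subset_one_on_sdiff (fun i hi => ?_) (fun i hi => ?_) fun i hi => ?_).symm
  · simp only [mem_Icc, mem_range] at hi ⊢
    omega
  · obtain rfl : i = 0 := by
      simp only [mem_sdiff, mem_Icc, mem_range] at hi
      omega
    simp [prevStep_zero, peakWt, bitVal]
  · have i_ne_zero : i ≠ 0 := Nat.one_le_iff_ne_zero.1 (mem_Icc.1 hi).1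
    simp only [peakWt, prevStep, if_neg i_ne_zero]

theorem sum_dyckPaths_eq_pathSum (ht : t ≠ 0) (L : ℕ) :
    ∑ s ∈ dyckPaths L, t ^ (∑ i ∈ highPeaks s, (2 * pht s i + 1)) *
      ∏ i ∈ range (L + 1), (1 - t ^ (2 * pht s i + 1))⁻¹ = pathSum t false 0 L := by
  simp only [pathSum, pathWt, zero_add, prod_peakWt_eq_prod_highPeaks, ← zpow_sum₀ ht, pointWt,
    dyckPaths_eq_pathsFrom]

end Paths

/-! ### Alternating permutations and the `q`-sine -/

section AltSeries

open PowerSeries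

/-- The generating function `∑ E*_{2n+1}(t) / (t; t)_{2n+1} x^n`. -/
def altSeries {K : Type*} [Field K] (t : K) : K⟦X⟧ := mk fun n =>
  (∑ π ∈ altPerms (2 * n + 1), t ^ majKappaInv (2 * n + 1) π) / qPochhammer t (2 * n + 1)

theorem sum_range_alternating_add {R : Type*} [CommRing R] (x : ℕ → R) (n : ℕ) :
    ∑ j ∈ range n, (-1) ^ (j + 1) * (x j + x (j + 1)) = (-1) ^ n * x n - x 0 := by
  induction n with
  | zero => simp
  | succ n ih =>
    rw [sum_range_succ, ih]
    ring

variable {t : ℝ}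

theorem one_sub_pow_succ_pos (h0 : 0 ≤ t) (h1 : t < 1) (k : ℕ) : 0 < 1 - t ^ (k + 1) :=
  sub_pos.2 (pow_lt_one₀ h0 h1 k.succ_ne_zero)

theorem toReal_prod_one_sub_pow_inv (h0 : 0 ≤ t) (h1 : t < 1) (k : ℕ) :
    (∏ i ∈ range k, (1 - ENNReal.ofReal t ^ (i + 1))⁻¹).toReal = (qPochhammer t k)⁻¹ := by
  rw [ENNReal.toReal_prod, qPochhammer, ← prod_inv_distrib]
  refine prod_congr rfl fun i _ => ?_
  rw [ENNReal.toReal_inv, ← ENNReal.ofReal_pow h0, ← ENNReal.ofReal_one,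
    ← ENNReal.ofReal_sub _ (pow_nonneg h0 _),
    ENNReal.toReal_ofReal (one_sub_pow_succ_pos h0 h1 i).le]

/-- The total weight `∑ t^{a₀ + ⋯ + a_{2n}}` of the zigzags with relations `zigzagRel j`. -/
def zigzagTotal (t : ℝ) (n j : ℕ) : ℝ :=
  (chainTotal (fun a => ENNReal.ofReal t ^ a) (2 * n) (zigzagRel j)).toReal

theorem zigzagTotal_zero (h0 : 0 ≤ t) (h1 : t < 1) (n : ℕ) :
    zigzagTotal t n 0 = coeff n (altSeries t) := by
  rw [zigzagTotal, chainTotal_zigzagRel_zero, ENNReal.toReal_mul,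
    toReal_prod_one_sub_pow_inv h0 h1,
    ENNReal.toReal_sum fun _ _ => ENNReal.pow_ne_top ENNReal.ofReal_ne_top, altSeries, coeff_mk,
    div_eq_mul_inv]
  simp only [ENNReal.toReal_pow, ENNReal.toReal_ofReal h0]

theorem zigzagTotal_self (h0 : 0 ≤ t) (h1 : t < 1) (n : ℕ) :
    zigzagTotal t n n = t ^ (n * (n + 1)) / qPochhammer t (2 * n + 1) := by
  rw [zigzagTotal, chainTotal_zigzagRel_self, ENNReal.toReal_mul,
    toReal_prod_one_sub_pow_inv h0 h1, ENNReal.toReal_pow, ENNReal.toReal_ofReal h0,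
    div_eq_mul_inv]

theorem tsum_ofReal_pow_ne_top (h1 : t < 1) : ∑' a : ℕ, ENNReal.ofReal t ^ a ≠ ⊤ := by
  simpa [ENNReal.tsum_geometric, tsub_eq_zero_iff_le] using h1

theorem zigzagTotal_add_zigzagTotal (h0 : 0 ≤ t) (h1 : t < 1) (m j : ℕ) :
    zigzagTotal t (m + j + 1) j + zigzagTotal t (m + j + 1) (j + 1) =
      t ^ (j * (j + 1)) / qPochhammer t (2 * j + 2) * zigzagTotal t m 0 := by
  have finite := chainTotal_ne_top (tsum_ofReal_pow_ne_top h1) (2 * (m + j + 1))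
  simp only [zigzagTotal]
  rw [← ENNReal.toReal_add (finite _) (finite _), chainTotal_zigzagRel_add, ENNReal.toReal_mul,
    ENNReal.toReal_mul, toReal_prod_one_sub_pow_inv h0 h1, ENNReal.toReal_pow,
    ENNReal.toReal_ofReal h0, div_eq_mul_inv]

theorem coeff_cosSeries_mul_zigzagTotal (h0 : 0 ≤ t) (h1 : t < 1) (m j : ℕ) :
    coeff (j + 1) (cosSeries t) * coeff m (altSeries t) =
      (-1) ^ (j + 1) * (zigzagTotal t (m + j + 1) j + zigzagTotal t (m + j + 1) (j + 1)) := by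
  rw [zigzagTotal_add_zigzagTotal h0 h1, zigzagTotal_zero h0 h1, cosSeries, coeff_mk,
    Nat.add_sub_cancel, mul_comm (j + 1) j, mul_add_one 2 j, mul_div_assoc, mul_assoc]

/-- The product is computed by inclusion–exclusion: its coefficients are alternating sums of
`zigzagTotal` which telescope. -/
theorem cosSeries_mul_altSeries (h0 : 0 ≤ t) (h1 : t < 1) :
    cosSeries t * altSeries t = sinSeries t 0 := by
  ext n
  have telescope : ∑ j ∈ range n, coeff (j + 1) (cosSeries t) * coeff (n - (j + 1)) (altSeries t) =
      (-1) ^ n * zigzagTotal t n n - zigzagTotal t n 0 := by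
    rw [← sum_range_alternating_add (zigzagTotal t n)]
    refine sum_congr rfl fun j hj => ?_
    obtain ⟨m, rfl⟩ := Nat.exists_eq_add_of_le' (Nat.succ_le_of_lt (mem_range.1 hj))
    rw [Nat.add_sub_cancel, coeff_cosSeries_mul_zigzagTotal h0 h1, add_assoc]
  have coeff_zero_cosSeries : coeff 0 (cosSeries t) = 1 := by simp [cosSeries, qPochhammer]
  rw [coeff_mul, Nat.sum_antidiagonal_eq_sum_range_succ_mk, sum_range_succ', telescope,
    coeff_zero_cosSeries, Nat.sub_zero, one_mul, ← zigzagTotal_zero h0 h1, sub_add_cancel,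
    zigzagTotal_self h0 h1, sinSeries, coeff_mk, evenProd, prod_range_zero, mul_one, mul_zero,
    add_zero, mul_div_assoc]

theorem altSeries_eq_pathSeries_zero (h0 : 0 ≤ t) (h1 : t < 1) :
    altSeries t = pathSeries t 0 := by
  refine mul_left_cancel₀ (cosSeries_ne_zero t) ?_
  rw [cosSeries_mul_altSeries h0 h1, mul_comm,
    pathSeries_mul_cosSeries fun k => (one_sub_pow_succ_pos h0 h1 k).ne']

theorem sum_altPerms_div_qPochhammer_eq_pathSum (h0 : 0 ≤ t) (h1 : t < 1) (n : ℕ) :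
    (∑ π ∈ altPerms (2 * n + 1), t ^ majKappaInv (2 * n + 1) π) / qPochhammer t (2 * n + 1) =
      pathSum t false 0 (2 * n) := by
  simpa [altSeries, pathSeries] using congrArg (coeff n) (altSeries_eq_pathSeries_zero h0 h1)

end AltSeries

/-! ### Transfer to rational functions -/

theorem exists_transcendental_mem_Ioo {a b : ℝ} (hab : a < b) :
    ∃ t ∈ Set.Ioo a b, Transcendental ℚ t := by
  by_contra! algebraic
  have countable : (Set.Ioo a b).Countable :=
    (Algebraic.countable ℚ ℝ).mono fun t ht => not_not.1 (algebraic t ht)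
  exact hab.not_ge (Cardinal.Real.Ioo_countable_iff.1 countable)

theorem exists_ringHom_ratFunc_apply_X {K L : Type*} [Field K] [Field L] [Algebra K L] {t : L}
    (ht : Transcendental K t) : ∃ φ : RatFunc K →+* L, φ RatFunc.X = t :=
  ⟨((IntermediateField.val _).comp (RatFunc.algEquivOfTranscendental t ht).toAlgHom).toRingHom,
    by simp⟩

theorem statement_1 (n : ℕ) :
    (∑ π ∈ altPerms (2 * n + 1), (RatFunc.X : RatFunc ℚ) ^ majKappaInv (2 * n + 1) π) /
        ∏ i ∈ Finset.Icc 1 (2 * n + 1), (1 - (RatFunc.X : RatFunc ℚ) ^ i) =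
      ∑ s ∈ dyckPaths (2 * n),
        (RatFunc.X : RatFunc ℚ) ^ (∑ i ∈ highPeaks s, (2 * pht s i + 1)) *
          ∏ i ∈ Finset.range (2 * n + 1),
            (1 - (RatFunc.X : RatFunc ℚ) ^ (2 * pht s i + 1))⁻¹ := by
  obtain ⟨t, ⟨h0, h1⟩, ht⟩ := exists_transcendental_mem_Ioo zero_lt_one
  obtain ⟨φ, φ_X⟩ := exists_ringHom_ratFunc_apply_X ht
  apply φ.injective
  simp only [map_div₀, map_sum, map_mul, map_pow, map_zpow₀, map_prod, map_inv₀, map_sub, map_one,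
    φ_X]
  rw [prod_Icc_one_sub_pow, sum_dyckPaths_eq_pathSum h0.ne',
    sum_altPerms_div_qPochhammer_eq_pathSum h0.le h1]

end Paper
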